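/- Let f ∈ C(ℝ; ℝ) and define F : ℝ → ℝ by F(t) = ∫_0^{t²} f(√s) ds. Let u, v ∈ C¹(ℝ^d; ℝ^d) with div v(x) = 0 for all x. Then the vector field x ↦ F(|u(x)|) v(x) is differentiable on ℝ^d and its divergence satisfies div(F(|u|) v)(x) = 2 f(|u(x)|) ⟨((v·∇)u)(x), u(x)⟩ for every x ∈ ℝ^d. -/

import Mathlib

/-! The function `G(r) = ∫_0^r f(√s) ds` is `C¹` on the whole line, because `s ↦ f(√s)` is
continuous on `ℝ` (with `√s = 0` for `s < 0`). Since `F(|u|) = G(|u|²)` and `|u|²` is smooth in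
`u`, the composition is differentiable also at the zeros of `u`, with derivative
`h ↦ 2 f(|u|) ⟨u, Du h⟩`. The product rule for `F(|u|) v` and `div v = 0` give the formula. -/

open MeasureTheory Filter Set Finset
open scoped RealInnerProductSpace Topology

/-- with `F(t) = ∫_0^{t²} f(√s) ds`, `u, v ∈ C¹(ℝ^d; ℝ^d)` and `div v = 0`,
the field `x ↦ F(|u(x)|) v(x)` is differentiable and
`div(F(|u|) v)(x) = 2 f(|u(x)|) ⟨((v·∇)u)(x), u(x)⟩` for every `x`. -/
theorem div_F_norm_u_smul_v {d : ℕ} (f : ℝ → ℝ) (hf : Continuous f)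
    (F : ℝ → ℝ) (hF : ∀ t : ℝ, F t = ∫ s in (0:ℝ)..(t ^ 2), f (Real.sqrt s))
    (u v : EuclideanSpace ℝ (Fin d) → EuclideanSpace ℝ (Fin d))
    (hu : ContDiff ℝ 1 u) (hv : ContDiff ℝ 1 v)
    (hdiv : ∀ x, ∑ i, fderiv ℝ v x (EuclideanSpace.single i (1 : ℝ)) i = 0) :
    Differentiable ℝ (fun x => F ‖u x‖ • v x) ∧
    ∀ x, ∑ i, fderiv ℝ (fun y => F ‖u y‖ • v y) x (EuclideanSpace.single i (1 : ℝ)) i =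
        2 * f ‖u x‖ *
          ⟪∑ i, v x i • fderiv ℝ u x (EuclideanSpace.single i (1 : ℝ)), u x⟫ := by
  have hcont : Continuous fun s : ℝ => f (Real.sqrt s) := hf.comp Real.continuous_sqrt
  have hud : Differentiable ℝ u := hu.differentiable one_ne_zero
  have hvd : Differentiable ℝ v := hv.differentiable one_ne_zero
  have hFu : ∀ x, HasFDerivAt (fun y => F ‖u y‖)
      (f ‖u x‖ • (2 • (innerSL ℝ (u x)).comp (fderiv ℝ u x))) x := by
    intro x
    have hG : HasDerivAt (fun r : ℝ => ∫ s in (0:ℝ)..r, f (Real.sqrt s)) (f ‖u x‖)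
        (‖u x‖ ^ 2) := by
      have h' := intervalIntegral.integral_hasDerivAt_right
        (hcont.intervalIntegrable 0 (‖u x‖ ^ 2))
        (hcont.stronglyMeasurableAtFilter _ _) hcont.continuousAt
      rwa [Real.sqrt_sq (norm_nonneg _)] at h'
    simp only [hF]
    exact hG.comp_hasFDerivAt x (hud x).hasFDerivAt.norm_sq
  have hprod := fun x => (hFu x).smul (hvd x).hasFDerivAt
  refine ⟨fun x => (hprod x).differentiableAt, fun x => ?_⟩
  have hfd : fderiv ℝ (fun y => F ‖u y‖ • v y) x = _ := (hprod x).fderiv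
  rw [hfd, sum_inner, Finset.mul_sum]
  have hterm : ∀ i, (F ‖u x‖ • fderiv ℝ v x + (f ‖u x‖ • (2 •
      (innerSL ℝ (u x)).comp (fderiv ℝ u x))).smulRight (v x))
        (EuclideanSpace.single i (1 : ℝ)) i =
      F ‖u x‖ * fderiv ℝ v x (EuclideanSpace.single i (1 : ℝ)) i +
        2 * f ‖u x‖ * ⟪v x i • fderiv ℝ u x (EuclideanSpace.single i (1 : ℝ)), u x⟫ := by
    intro i
    rw [real_inner_comm, real_inner_smul_right]
    simp
    ring
  rw [Finset.sum_congr rfl fun i _ => hterm i, Finset.sum_add_distrib, ← Finset.mul_sum, hdiv,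
    mul_zero, zero_add]
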